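/- Let λ ∈ ℂ*, a, b ∈ ℂ, and let W ∈ O_𝔚 be a nontrivial simple highest weight 𝔚-module with highest weight b'. Then the Virasoro module L(W, λ, a, b) is simple if and only if either (λ ∉ {1, −1} and b ≠ 1), or (λ = −1, b ≠ 1 and b ≠ b' + 1). -/

import Mathlib

/-- A representation of the Witt algebra `𝔚 = span{d_i : i ≥ -1}`, encoded by the family of
operators `d i` (only the indices `i ≥ -1` are relevant) satisfying
`[d_m, d_n] = (n - m) d_{m+n}`. -/
structure WittRep (W : Type*) [AddCommGroup W] [Module ℂ W] where
  d : ℤ → W →ₗ[ℂ] W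
  comm : ∀ m n : ℤ, -1 ≤ m → -1 ≤ n →
    d m ∘ₗ d n - d n ∘ₗ d m = (((n - m : ℤ) : ℂ)) • d (m + n)

namespace WittRep

variable {W : Type*} [AddCommGroup W] [Module ℂ W]

/-- Condition A : the module lies in the category `O_𝔚`. -/
def InO (ρ : WittRep W) : Prop :=
  ∀ v : W, ∃ n : ℕ, ∀ i : ℤ, (n : ℤ) ≤ i → ρ.d i v = 0

/-- The module is trivial: the Lie algebra acts by zero. -/
def IsTrivial (ρ : WittRep W) : Prop := ∀ i : ℤ, -1 ≤ i → ρ.d i = 0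

/-- A `𝔚`-submodule. -/
def Invariant (ρ : WittRep W) (U : Submodule ℂ W) : Prop :=
  ∀ i : ℤ, -1 ≤ i → ∀ u ∈ U, ρ.d i u ∈ U

/-- Simplicity of a `𝔚`-module. -/
def IsSimple (ρ : WittRep W) : Prop :=
  (∃ v : W, v ≠ 0) ∧ ∀ U : Submodule ℂ W, ρ.Invariant U → U = ⊥ ∨ U = ⊤

/-- A `𝔟`-submodule (`𝔟 = span{d_i : i ≥ 0}`). -/
def BInvariant (ρ : WittRep W) (U : Submodule ℂ W) : Prop :=
  ∀ i : ℤ, 0 ≤ i → ∀ u ∈ U, ρ.d i u ∈ U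

/-- The socle `Soc_𝔟(W)`: the sum of the minimal nonzero `𝔟`-submodules. -/
def Soc (ρ : WittRep W) : Submodule ℂ W :=
  sSup {U | ρ.BInvariant U ∧ U ≠ ⊥ ∧
    ∀ U' : Submodule ℂ W, ρ.BInvariant U' → U' ≠ ⊥ → U' ≤ U → U' = U}

/-- `w₀` is a highest weight vector of weight `b'`. -/
def IsHW (ρ : WittRep W) (w₀ : W) (b' : ℂ) : Prop :=
  w₀ ≠ 0 ∧ ρ.d 0 w₀ = b' • w₀ ∧ ∀ i : ℤ, 1 ≤ i → ρ.d i w₀ = 0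

/-- `w₀` generates the `𝔚`-module. -/
def Generates (ρ : WittRep W) (w₀ : W) : Prop :=
  ∀ U : Submodule ℂ W, ρ.Invariant U → w₀ ∈ U → U = ⊤

/-- The operator `e^{kt} d/dt = Σ_{i ≥ 0} (k^i/i!) d_{i-1}` (a finite sum on each vector of a
module in `O_𝔚`). -/
noncomputable def E (ρ : WittRep W) (k : ℤ) (w : W) : W :=
  ∑ᶠ i : ℕ, (((k : ℂ) ^ i) / (Nat.factorial i : ℂ)) • ρ.d ((i : ℤ) - 1) w

/-- The action of `d_k` on `L(W, λ, a, b) = W ⊗ ℂ[t, t⁻¹]`, realized on `ℤ →₀ W`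
(`w ⊗ t^j ↦ Finsupp.single j w`):
`d_k · (w ⊗ t^j) = ((λ^k e^{kt} − 1) d/dt + a + kb + j) w ⊗ t^{k+j}`. -/
noncomputable def Lact (ρ : WittRep W) (lam a b : ℂ) (k : ℤ) (f : ℤ →₀ W) : ℤ →₀ W :=
  f.sum fun j w => Finsupp.single (k + j)
    (lam ^ k • ρ.E k w - ρ.d (-1) w + (a + (k : ℂ) * b + (j : ℂ)) • w)

/-- The PBW map `ℕ →₀ ℂ → W`, `(k, c) ↦ c • d_{-1}^k w₀`. -/
noncomputable def pbwMap (ρ : WittRep W) (w₀ : W) : (ℕ →₀ ℂ) →ₗ[ℂ] W :=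
  Finsupp.lsum ℂ fun k : ℕ => ((ρ.d (-1)) ^ k) ∘ₗ LinearMap.toSpanSingleton ℂ W w₀

/-- `W` is the Verma `𝔚`-module with highest weight vector `w₀` of highest weight `b'`. -/
def IsVerma (ρ : WittRep W) (w₀ : W) (b' : ℂ) : Prop :=
  ρ.d 0 w₀ = b' • w₀ ∧ (∀ i : ℤ, 1 ≤ i → ρ.d i w₀ = 0) ∧
    Function.Bijective (ρ.pbwMap w₀)

/-- `W^{(n)} = Σ_{i=0}^n d_{-1}^i (Soc_𝔟 W)`. -/
noncomputable def Wn (ρ : WittRep W) (n : ℕ) : Submodule ℂ W :=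
  ⨆ i : Fin (n + 1), Submodule.map ((ρ.d (-1)) ^ (i : ℕ)) ρ.Soc

/-- `L₀(a, b') = span{d₁^i · (w₀ ⊗ t^{2j})} ⊆ L(W, -1, a, b' + 1)`. -/
noncomputable def Lzero (ρ : WittRep W) (a b' : ℂ) (w₀ : W) : Submodule ℂ (ℤ →₀ W) :=
  Submodule.span ℂ
    {g | ∃ (i : ℕ) (j : ℤ), g = (ρ.Lact (-1) a (b' + 1) 1)^[i] (Finsupp.single (2 * j) w₀)}

/-- `L₁(a, b') = span{d₁^i · (w₀ ⊗ t^{2j+1})} ⊆ L(W, -1, a, b' + 1)`. -/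
noncomputable def Lone (ρ : WittRep W) (a b' : ℂ) (w₀ : W) : Submodule ℂ (ℤ →₀ W) :=
  Submodule.span ℂ
    {g | ∃ (i : ℕ) (j : ℤ), g = (ρ.Lact (-1) a (b' + 1) 1)^[i] (Finsupp.single (2 * j + 1) w₀)}

end WittRep

/-- A representation of the Lie algebra `𝔟 = span{d_i : i ≥ 0}`. -/
structure BRep (B : Type*) [AddCommGroup B] [Module ℂ B] where
  d : ℕ → B →ₗ[ℂ] B
  comm : ∀ m n : ℕ, d m ∘ₗ d n - d n ∘ₗ d m = (((n : ℂ) - (m : ℂ))) • d (m + n)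

namespace BRep

variable {B : Type*} [AddCommGroup B] [Module ℂ B]

/-- Condition A : the module lies in the category `O_𝔟`. -/
def InO (ρ : BRep B) : Prop := ∀ v : B, ∃ n : ℕ, ∀ i : ℕ, n ≤ i → ρ.d i v = 0

def IsTrivial (ρ : BRep B) : Prop := ∀ i : ℕ, ρ.d i = 0

def IsSimple (ρ : BRep B) : Prop :=
  (∃ v : B, v ≠ 0) ∧
    ∀ U : Submodule ℂ B, (∀ i : ℕ, ∀ u ∈ U, ρ.d i u ∈ U) → U = ⊥ ∨ U = ⊤

/-- The set of `r ∈ ℤ≥0` such that `d_{r+i} v = 0` for all `i ≥ 1`;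
`ord_𝔟(v)` is its least element. -/
def ordSet (ρ : BRep B) (v : B) : Set ℕ := {r : ℕ | ∀ i : ℕ, r + 1 ≤ i → ρ.d i v = 0}

/-- The action of `d_m` on the Virasoro module `N(B_(c), a) = B ⊗ ℂ[t, t⁻¹]`, realized on
`ℤ →₀ B`:  `d_m · (w ⊗ t^j) = (Σ_{i≥1} (m^i/i!) d_{i-1} + mc + a + j) w ⊗ t^{m+j}`
(`c` is the twist of the `d₀`-action; `c = 0` gives `N(B, a)`). -/
noncomputable def Nact (ρ : BRep B) (a c : ℂ) (m : ℤ) (f : ℤ →₀ B) : ℤ →₀ B :=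
  f.sum fun j w => Finsupp.single (m + j)
    ((∑ᶠ i : ℕ, (((m : ℂ) ^ (i + 1)) / (Nat.factorial (i + 1) : ℂ)) • ρ.d i w) +
      ((m : ℂ) * c + a + (j : ℂ)) • w)

end BRep

/-- For a family `U : ℤ → Submodule ℂ W`, the subspace `⊕_j U j ⊗ t^j` of `W ⊗ ℂ[t,t⁻¹]`. -/
def gradedSub {W : Type*} [AddCommGroup W] [Module ℂ W] (U : ℤ → Submodule ℂ W) :
    Submodule ℂ (ℤ →₀ W) where
  carrier := {f | ∀ j, f j ∈ U j}
  add_mem' := fun hf hg j => by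
    simpa only [Finsupp.add_apply] using (U j).add_mem (hf j) (hg j)
  zero_mem' := fun j => by simp
  smul_mem' := fun c f hf j => by
    simpa only [Finsupp.smul_apply] using (U j).smul_mem c (hf j)

/-- A submodule invariant under a (ℤ-indexed) family of operators. -/
def ActInvariant {V : Type*} [AddCommGroup V] [Module ℂ V] (act : ℤ → V → V)
    (M : Submodule ℂ V) : Prop :=
  ∀ k : ℤ, ∀ u ∈ M, act k u ∈ M

/-- Simplicity of the module given by a family of operators (the central element acts by zero). -/
def ActSimple {V : Type*} [AddCommGroup V] [Module ℂ V] (act : ℤ → V → V) : Prop :=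
  (∃ v : V, v ≠ 0) ∧ ∀ M : Submodule ℂ V, ActInvariant act M → M = ⊥ ∨ M = ⊤

/-- A representation of the Virasoro algebra. -/
structure VirasoroRep (V : Type*) [AddCommGroup V] [Module ℂ V] where
  d : ℤ → V →ₗ[ℂ] V
  z : V →ₗ[ℂ] V
  comm : ∀ m n : ℤ, d m ∘ₗ d n - d n ∘ₗ d m =
    (((n - m : ℤ) : ℂ)) • d (m + n) +
      (if m + n = 0 then (((n : ℂ) ^ 3 - (n : ℂ)) / 12) else 0) • z
  comm_z : ∀ m : ℤ, d m ∘ₗ z = z ∘ₗ d m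

/-!
Evaluating polynomials in `d_{-1}` at `w₀` identifies `W` with `ℂ[X]`, and `e^{kt} d/dt` becomes
`p(X) ↦ (X + k b') p(X - k)`. This needs `b' ≠ 0`: if `b' = 0`, then `u = d_{-1} w₀` is nonzero, as
`W` is nontrivial, and is a highest weight vector of weight `-1`, so `W` is freely generated by `u`
over `ℂ[d_{-1}]`; writing `w₀ = q(d_{-1}) u` would then give `X q(X) = 1`.

Since `d₀` acts on `W ⊗ t^j` by the scalar `a + j`, submodules of `L(W, λ, a, b)` are graded. For a
fixed `n` and a homogeneous element `p ⊗ t^j` of a submodule, `d_{n-m} d_m (p ⊗ t^j)` is, as a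
function of `m`, an exponential polynomial with bases `1`, `λ` and `λ⁻¹`, and the coefficients of an
exponential polynomial lie in every subspace containing its values. If `λ ≠ ±1`, the coefficient of
`λ^m m^{deg p + 2}` is the constant `(-1)^{deg p} (1 - b) b'` times the leading coefficient of `p`,
so for `b ≠ 1` the submodule contains `1 ⊗ t^i` for all `i`; repeated application of `d₁` to these
elements yields polynomials of all degrees. If `λ = -1`, the bases `λ` and `λ⁻¹` coincide and the
same argument reaches `1 ⊗ t^i` for the `i` of one parity only; passing to the other parity costs
the factor `b - b' - 1`.

In the remaining cases there are proper submodules: the multiples of `a + j - X` in degree `j` for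
`b = 1`, the constants for `λ = 1`, and the polynomials with `p(a + j - X) = (-1)^j p(X)` for
`λ = -1` and `b = b' + 1`.
-/

section ExponentialPolynomial

open Polynomial fwdDiff

variable {K : Type*} [Field K]

variable (K) in
/-- The shift operator `f ↦ f (· + 1)` on two-sided sequences; the sequences `m ↦ μ ^ m * P m` with
`P` polynomial are its generalized eigenvectors. -/
def intShift : Module.End K (ℤ → K) :=
  LinearMap.funLeft K K (· + 1)

theorem intShift_sub_smul_one_pow_apply {μ : K} (hμ : μ ≠ 0) (g : ℤ → K) (n : ℕ) :
    ((intShift K - μ • 1) ^ n) (fun m => μ ^ m * g m) =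
      fun m => μ ^ (m + (n : ℤ)) * (Δ_[1])^[n] g m := by
  induction n with
  | zero => simp
  | succ n ih =>
    ext m
    rw [pow_succ', Module.End.mul_apply, ih, Function.iterate_succ_apply']
    simp only [intShift, fwdDiff, LinearMap.sub_apply, LinearMap.smul_apply, Module.End.one_apply,
      LinearMap.funLeft_apply, Pi.sub_apply, Pi.smul_apply, smul_eq_mul, zpow_add₀ hμ, zpow_one,
      Nat.cast_succ]
    ring

theorem fwdDiff_iter_eval_intCast {R : Type*} [CommRing R] {P : R[X]} {n : ℕ}
    (hP : P.natDegree < n) : (Δ_[1])^[n] (fun m : ℤ => P.eval (m : R)) = 0 := by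
  ext m
  simpa [fwdDiff_iter_eq_sum_shift] using congrFun (fwdDiff_iter_eq_zero_of_degree_lt hP) (m : R)

theorem zpow_mul_eval_mem_maxGenEigenspace {μ : K} (hμ : μ ≠ 0) (P : K[X]) :
    (fun m : ℤ => μ ^ m * P.eval (m : K)) ∈ (intShift K).maxGenEigenspace μ := by
  refine (Module.End.mem_maxGenEigenspace _ _ _).2 ⟨P.natDegree + 1, ?_⟩
  rw [intShift_sub_smul_one_pow_apply hμ, fwdDiff_iter_eval_intCast P.natDegree.lt_succ_self]
  simp only [Pi.zero_apply, mul_zero]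
  rfl

theorem exists_coeff_eq_and_eval_intCast_eq {A : Type*} [CommRing A] [Algebra K A] (φ : A →ₗ[K] K)
    (F : A[X]) :
    ∃ P : K[X], (∀ n, P.coeff n = φ (F.coeff n)) ∧
      ∀ m : ℤ, P.eval (m : K) = φ (F.eval (m : A)) := by
  induction F using Polynomial.induction_on' with
  | add F G hF hG =>
    obtain ⟨P, hPc, hPe⟩ := hF
    obtain ⟨Q, hQc, hQe⟩ := hG
    exact ⟨P + Q, fun n => by simp [hPc, hQc], fun m => by simp [hPe, hQe]⟩
  | monomial l r =>
    refine ⟨monomial l (φ r), fun n => by simp [coeff_monomial, apply_ite φ], fun m => ?_⟩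
    have hr : r * (m : A) ^ l = (m : K) ^ l • r := by simp [Algebra.smul_def, mul_comm]
    rw [eval_monomial, eval_monomial, hr, map_smul, smul_eq_mul, mul_comm]

variable [CharZero K] {ι : Type*} [Fintype ι] {μ : ι → K}

theorem eq_zero_of_sum_zpow_mul_eval_eq_zero (hinj : Function.Injective μ) (hμ : ∀ i, μ i ≠ 0)
    {P : ι → K[X]} (h : ∀ m : ℤ, ∑ i, μ i ^ m * (P i).eval (m : K) = 0) (i : ι) : P i = 0 := by
  have hind := (Module.End.independent_maxGenEigenspace (intShift K)).comp hinj
  have hzero : (fun m : ℤ => μ i ^ m * (P i).eval (m : K)) = 0 :=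
    iSupIndep_iff_finsetSum_eq_zero_imp_eq_zero _ |>.1 hind Finset.univ
      (fun i (m : ℤ) => μ i ^ m * (P i).eval (m : K))
      (fun i _ => zpow_mul_eval_mem_maxGenEigenspace (hμ i) (P i))
      (by ext m; simpa using h m) i (Finset.mem_univ i)
  refine eq_zero_of_infinite_isRoot _
    ((Set.infinite_range_of_injective (Int.cast_injective (α := K))).mono ?_)
  rintro _ ⟨m, rfl⟩
  simpa [zpow_ne_zero, hμ i] using congrFun hzero m

theorem coeff_mem_of_sum_zpow_smul_eval_mem {A : Type*} [CommRing A] [Algebra K A]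
    (hinj : Function.Injective μ) (hμ : ∀ i, μ i ≠ 0) {F : ι → A[X]} {U : Submodule K A}
    (h : ∀ m : ℤ, ∑ i, μ i ^ m • (F i).eval (m : A) ∈ U) (i : ι) (n : ℕ) :
    (F i).coeff n ∈ U := by
  by_contra hn
  obtain ⟨φ, hφ, hU⟩ := Submodule.exists_le_ker_of_notMem hn
  choose P hcoeff heval using fun i => exists_coeff_eq_and_eval_intCast_eq φ (F i)
  have hP : P i = 0 := eq_zero_of_sum_zpow_mul_eval_eq_zero hinj hμ (fun m => by
    simpa [heval] using hU (h m)) i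
  exact hφ (by rw [← hcoeff, hP, coeff_zero])

end ExponentialPolynomial

section LinearSubstitution

open Polynomial

variable {R : Type*} [CommRing R]

theorem comp_linear_eq_taylor_comp (q : R[X]) (ε ζ : R) :
    q.comp (C ε * X + C ζ) = (taylor ζ q).comp (C ε * X) := by
  rw [taylor_apply, comp_assoc]
  simp

theorem natDegree_comp_linear_le (q : R[X]) (ε ζ : R) :
    (q.comp (C ε * X + C ζ)).natDegree ≤ q.natDegree := by
  simpa using natDegree_comp_le.trans (Nat.mul_le_mul_left q.natDegree natDegree_linear_le)

theorem coeff_comp_linear_natDegree (q : R[X]) (ε ζ : R) :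
    (q.comp (C ε * X + C ζ)).coeff q.natDegree = q.leadingCoeff * ε ^ q.natDegree := by
  rw [comp_linear_eq_taylor_comp, comp_C_mul_X_coeff, coeff_taylor_natDegree]

theorem coeff_linear_mul_comp_linear (q : R[X]) (γ δ ε ζ : R) :
    ((C γ * X + C δ) * q.comp (C ε * X + C ζ)).coeff (1 + q.natDegree) =
      γ * (q.leadingCoeff * ε ^ q.natDegree) := by
  rw [coeff_mul_add_eq_of_natDegree_le natDegree_linear_le (natDegree_comp_linear_le q ε ζ),
    coeff_comp_linear_natDegree]
  simp

theorem coeff_linear_mul_linear_mul_comp_linear (q : R[X]) (α β γ δ ε ζ : R) :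
    ((C α * X + C β) * ((C γ * X + C δ) * q.comp (C ε * X + C ζ))).coeff
      (1 + (1 + q.natDegree)) = α * (γ * (q.leadingCoeff * ε ^ q.natDegree)) := by
  have hq := natDegree_comp_linear_le q ε ζ
  rw [coeff_mul_add_eq_of_natDegree_le natDegree_linear_le
      (natDegree_mul_le.trans (add_le_add natDegree_linear_le hq)),
    coeff_linear_mul_comp_linear]
  simp

end LinearSubstitution

section Graded

variable {R V V' : Type*} [Ring R] [AddCommGroup V] [Module R V] [AddCommGroup V'] [Module R V']

/-- The subspaces `N j ⊗ t ^ j` are the homogeneous components of a graded submodule of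
`V ⊗ R[t, t⁻¹]` with the operators `d_k (v ⊗ t ^ j) = D k j v ⊗ t ^ (k + j)`. -/
def GradedStable (D : ℤ → ℤ → V → V) (N : ℤ → Submodule R V) : Prop :=
  ∀ k j : ℤ, ∀ v ∈ N j, D k j v ∈ N (k + j)

variable (R) in
/-- `V ⊗ R[t, t⁻¹]` with the operators `d_k (v ⊗ t ^ j) = D k j v ⊗ t ^ (k + j)` has no proper
nonzero graded submodule; graded submodules are encoded by their homogeneous components. -/
def GradedSimple (D : ℤ → ℤ → V → V) : Prop :=
  (∃ v : V, v ≠ 0) ∧ ∀ N : ℤ → Submodule R V, GradedStable D N → N = ⊥ ∨ N = ⊤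

theorem GradedStable.apply_sub_apply_mem {D : ℤ → ℤ → V → V} {N : ℤ → Submodule R V}
    (hN : GradedStable D N) {j : ℤ} {v : V} (hv : v ∈ N j) (n m : ℤ) :
    D (n - m) (m + j) (D m j v) ∈ N (n + j) := by
  simpa only [← add_assoc, sub_add_cancel] using hN (n - m) (m + j) _ (hN m j v hv)

theorem GradedStable.not_gradedSimple {D : ℤ → ℤ → V → V} {N : ℤ → Submodule R V}
    (hN : GradedStable D N) {i j : ℤ} (hi : N i ≠ ⊥) (hj : N j ≠ ⊤) : ¬ GradedSimple R D := fun h =>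
  (h.2 N hN).elim (fun hbot => hi (congrFun hbot i)) (fun htop => hj (congrFun htop j))

theorem GradedSimple.of_linearEquiv (e : V ≃ₗ[R] V') {D : ℤ → ℤ → V → V} {D' : ℤ → ℤ → V' → V'}
    (he : ∀ k j v, e (D k j v) = D' k j (e v)) (h : GradedSimple R D) : GradedSimple R D' := by
  obtain ⟨⟨v, hv⟩, hsimple⟩ := h
  refine ⟨⟨e v, e.map_ne_zero_iff.2 hv⟩, fun N hN => ?_⟩
  have hcomap : GradedStable D fun j => (N j).comap (e : V →ₗ[R] V') := fun k j v hv => by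
    simpa only [Submodule.mem_comap, LinearEquiv.coe_coe, he] using hN k j (e v) hv
  refine (hsimple _ hcomap).imp (fun hbot => funext fun j => ?_) fun htop => funext fun j => ?_
  · exact Submodule.comap_injective_of_surjective e.surjective
      ((congrFun hbot j).trans (LinearMap.ker_eq_bot.2 e.injective).symm)
  · exact Submodule.comap_injective_of_surjective (f := (e : V →ₗ[R] V')) e.surjective
      (congrFun htop j)

theorem gradedSimple_congr (e : V ≃ₗ[R] V') {D : ℤ → ℤ → V → V} {D' : ℤ → ℤ → V' → V'}
    (he : ∀ k j v, e (D k j v) = D' k j (e v)) : GradedSimple R D ↔ GradedSimple R D' :=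
  ⟨.of_linearEquiv e he, .of_linearEquiv e.symm fun k j v => by
    rw [LinearEquiv.symm_apply_eq, he, LinearEquiv.apply_symm_apply]⟩

/-- The operator `d_k (v ⊗ t ^ j) = D k j v ⊗ t ^ (k + j)` on `V ⊗ R[t, t⁻¹]`, realized on
`ℤ →₀ V`. -/
noncomputable def gradedAct (D : ℤ → ℤ → V → V) (k : ℤ) (f : ℤ →₀ V) : ℤ →₀ V :=
  f.sum fun j v => Finsupp.single (k + j) (D k j v)

theorem gradedAct_single {D : ℤ → ℤ → V → V} (hD : ∀ k j, D k j 0 = 0) (k j : ℤ) (v : V) :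
    gradedAct D k (Finsupp.single j v) = Finsupp.single (k + j) (D k j v) :=
  Finsupp.sum_single_index (by rw [hD, Finsupp.single_zero])

theorem gradedAct_apply {D : ℤ → ℤ → V → V} (hD : ∀ k j, D k j 0 = 0) (k : ℤ) (f : ℤ →₀ V)
    (i : ℤ) : gradedAct D k f i = D k (i - k) (f (i - k)) := by
  rw [gradedAct, Finsupp.sum_apply, Finsupp.sum, Finset.sum_eq_single (i - k)]
  · simp
  · exact fun j _ hj => Finsupp.single_eq_of_ne (by omega)
  · intro h
    simp [Finsupp.notMem_support_iff.1 h, hD]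

end Graded

theorem single_apply_mem_of_diagonal {K V ι : Type*} [Field K] [AddCommGroup V] [Module K V]
    {T : (ι →₀ V) → ι →₀ V} {c : ι → K} (hc : Function.Injective c)
    (hT : ∀ f i, T f i = c i • f i) {M : Submodule K (ι →₀ V)} (hM : ∀ f ∈ M, T f ∈ M)
    {f : ι →₀ V} (hf : f ∈ M) (j : ι) : Finsupp.single j (f j) ∈ M := by
  classical
  have key (s : Finset ι) : ∃ g ∈ M, ∀ i, g i = (∏ l ∈ s, (c i - c l)) • f i := by
    induction s using Finset.induction_on with
    | empty => exact ⟨f, hf, fun i => by simp⟩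
    | insert l s hl ih =>
      obtain ⟨g, hg, hgi⟩ := ih
      refine ⟨T g - c l • g, M.sub_mem (hM g hg) (M.smul_mem _ hg), fun i => ?_⟩
      rw [Finsupp.sub_apply, Finsupp.smul_apply, hT, ← sub_smul, hgi, smul_smul,
        Finset.prod_insert hl]
  obtain ⟨g, hg, hgi⟩ := key (f.support.erase j)
  have hprod : ∏ l ∈ f.support.erase j, (c j - c l) ≠ 0 := Finset.prod_ne_zero_iff.2 fun l hl =>
    sub_ne_zero.2 (hc.ne (Finset.ne_of_mem_erase hl).symm)
  have hsingle : Finsupp.single j (f j) = (∏ l ∈ f.support.erase j, (c j - c l))⁻¹ • g := by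
    ext i
    rw [Finsupp.smul_apply, hgi]
    obtain rfl | hij := eq_or_ne j i
    · rw [Finsupp.single_eq_same, inv_smul_smul₀ hprod]
    · obtain hi | hi := eq_or_ne (f i) 0
      · simp [hi, hij.symm]
      · have hzero : ∏ l ∈ f.support.erase j, (c i - c l) = 0 :=
          Finset.prod_eq_zero (by simp [hij.symm, hi]) (sub_self (c i))
        simp [hzero, hij.symm]
  rw [hsingle]
  exact M.smul_mem _ hg

section GradedSub

variable {V : Type*} [AddCommGroup V] [Module ℂ V]

theorem single_mem_gradedSub_iff {N : ℤ → Submodule ℂ V} {j : ℤ} {v : V} :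
    Finsupp.single j v ∈ gradedSub N ↔ v ∈ N j := by
  refine ⟨fun h => by simpa using h j, fun h i => ?_⟩
  obtain rfl | hij := eq_or_ne j i
  · simpa using h
  · simp [hij.symm]

theorem gradedSub_eq_bot_iff {N : ℤ → Submodule ℂ V} : gradedSub N = ⊥ ↔ N = ⊥ := by
  refine ⟨fun h => funext fun j => (Submodule.eq_bot_iff _).2 fun v hv => ?_, ?_⟩
  · have hsingle := single_mem_gradedSub_iff.2 hv
    rwa [h, Submodule.mem_bot, Finsupp.single_eq_zero] at hsingle
  · rintro rfl
    exact (Submodule.eq_bot_iff _).2 fun f hf => Finsupp.ext hf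

theorem gradedSub_eq_top_iff {N : ℤ → Submodule ℂ V} : gradedSub N = ⊤ ↔ N = ⊤ := by
  refine ⟨fun h => funext fun j => (Submodule.eq_top_iff'.2 fun v => ?_), ?_⟩
  · exact single_mem_gradedSub_iff.1 (h ▸ Submodule.mem_top)
  · rintro rfl
    exact Submodule.eq_top_iff'.2 fun f j => Submodule.mem_top

theorem exists_gradedSub_eq {M : Submodule ℂ (ℤ →₀ V)}
    (hM : ∀ f ∈ M, ∀ j, Finsupp.single j (f j) ∈ M) : ∃ N, gradedSub N = M := by
  refine ⟨fun j => M.comap (Finsupp.lsingle j), le_antisymm (fun f hf => ?_) hM⟩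
  rw [← Finsupp.sum_single f]
  exact M.sum_mem fun j _ => hf j

variable {D : ℤ → ℤ → V → V}

theorem actInvariant_gradedSub_iff (hD : ∀ k j, D k j 0 = 0) {N : ℤ → Submodule ℂ V} :
    ActInvariant (gradedAct D) (gradedSub N) ↔ GradedStable D N := by
  refine ⟨fun h k j v hv => ?_, fun h k f hf i => ?_⟩
  · simpa only [gradedAct_single hD, single_mem_gradedSub_iff] using
      h k _ (single_mem_gradedSub_iff.2 hv)
  · rw [gradedAct_apply hD]
    simpa using h k (i - k) _ (hf (i - k))

theorem actSimple_gradedAct_iff (hD : ∀ k j, D k j 0 = 0) {c : ℤ → ℂ} (hc : Function.Injective c)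
    (hD₀ : ∀ j v, D 0 j v = c j • v) :
    ActSimple (gradedAct D) ↔ GradedSimple ℂ D := by
  refine and_congr ⟨?_, ?_⟩ ⟨fun h N hN => ?_, fun h M hM => ?_⟩
  · rintro ⟨f, hf⟩
    obtain ⟨j, hj⟩ := Finsupp.ne_iff.1 hf
    exact ⟨f j, hj⟩
  · rintro ⟨v, hv⟩
    exact ⟨Finsupp.single 0 v, by simpa using hv⟩
  · simpa only [gradedSub_eq_bot_iff, gradedSub_eq_top_iff] using
      h _ ((actInvariant_gradedSub_iff hD).2 hN)
  · have hdiag (f : ℤ →₀ V) (i : ℤ) : gradedAct D 0 f i = c i • f i := by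
      rw [gradedAct_apply hD, hD₀, sub_zero]
    obtain ⟨N, rfl⟩ := exists_gradedSub_eq fun f hf j =>
      single_apply_mem_of_diagonal hc hdiag (hM 0) hf j
    simpa only [gradedSub_eq_bot_iff, gradedSub_eq_top_iff] using
      h N ((actInvariant_gradedSub_iff hD).1 hM)

end GradedSub

section PolynomialModel

open Polynomial Polynomial.Bivariate

variable {K : Type*} [Field K]

/-- The action of `d_k` on `p ⊗ t ^ j` in the model `W = K[X]`, where `d_{-1}` is multiplication by
`X` and `e^{kt} d/dt` is `p(X) ↦ (X + k b') p(X - k)`. -/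
noncomputable def polyAct (lam a b b' : K) (k j : ℤ) (p : K[X]) : K[X] :=
  lam ^ k • ((X + C (k * b')) * taylor (-k : K) p) + (C (a + k * b + j) - X) * p

/-- The polynomial `(X + Y b') p(X - Y)`, which gives the action of `e^{kt} d/dt` in the model
`W = K[X]` for `Y = k`. -/
noncomputable def expPoly (b' : K) (p : K[X]) : K[X][Y] :=
  (C (C b') * Y + C X) * (p.map C).comp (C (-1) * Y + C X)

/-- The part of `d_{n-m} d_m (p ⊗ t ^ j)` polynomial in `m`, as a polynomial in `Y = m`, where
`c = a + j`. -/
noncomputable def polyPart (lam c b b' : K) (n : ℤ) (p : K[X]) : K[X][Y] :=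
  C (C (lam ^ n)) * (C (-C b') * Y + C (X + C (n * b'))) *
      (C (C (b' + 1)) * Y + C (X - C (n : K))) * C (taylor (-n : K) p) +
    (C (C (1 - b)) * Y + C (C (c + n * b) - X)) * (C (C b) * Y + C (C c - X)) * C p

/-- The coefficient of `lam ^ m` in `d_{n-m} d_m (p ⊗ t ^ j)`, as a polynomial in `Y = m`, where
`c = a + j`. -/
noncomputable def expPart (c b b' : K) (n : ℤ) (p : K[X]) : K[X][Y] :=
  (C (C (1 - b)) * Y + C (C (c + n * b) - X)) * expPoly b' p

/-- The coefficient of `lam ^ (-m)` in `d_{n-m} d_m (p ⊗ t ^ j)`, as a polynomial in `Y = m`, where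
`c = a + j`. -/
noncomputable def negExpPart (lam c b b' : K) (n : ℤ) (p : K[X]) : K[X][Y] :=
  (C (-C (lam ^ n * b')) * Y + C (C (lam ^ n) * (X + C (n * b')))) *
    ((C (-C (1 - b)) * Y + C (C (c + n) - X)) * (p.map C).comp (C 1 * Y + C (X - C (n : K))))

theorem eval_map_C_comp_linear (p ε ζ x : K[X]) :
    ((p.map C).comp (C ε * Y + C ζ)).eval x = p.comp (ε * x + ζ) := by
  rw [eval_comp, eval_map, comp]
  simp

theorem eval_expPoly (b' z : K) (p : K[X]) :
    (expPoly b' p).eval (C z) = (X + C (z * b')) * taylor (-z) p := by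
  rw [expPoly, eval_mul, eval_map_C_comp_linear, taylor_apply,
    show -1 * C z + X = X + C (-z) by rw [C_neg]; ring]
  simp only [eval_add, eval_mul, eval_C, eval_X, C_mul]
  ring

theorem eval_polyPart (lam c b b' z : K) (n : ℤ) (p : K[X]) :
    (polyPart lam c b b' n p).eval (C z) =
      C (lam ^ n) * ((X + C ((n - z) * b')) * ((X + C (z * b' - (n - z))) * taylor (-n : K) p)) +
        (C (c + z + (n - z) * b) - X) * ((C (c + z * b) - X) * p) := by
  simp only [polyPart, eval_add, eval_mul, eval_C, eval_X]
  simp only [C_add, C_sub, C_mul, C_1]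
  ring

theorem eval_expPart (c b b' z : K) (n : ℤ) (p : K[X]) :
    (expPart c b b' n p).eval (C z) =
      (C (c + z + (n - z) * b) - X) * ((X + C (z * b')) * taylor (-z) p) := by
  rw [expPart, eval_mul, eval_expPoly]
  simp only [eval_add, eval_mul, eval_C, eval_X]
  simp only [C_add, C_sub, C_mul, C_1]
  ring

theorem eval_negExpPart (lam c b b' z : K) (n : ℤ) (p : K[X]) :
    (negExpPart lam c b b' n p).eval (C z) =
      C (lam ^ n) * ((X + C ((n - z) * b')) *
        ((C (c + z * b + (n - z)) - X) * taylor (z - n) p)) := by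
  rw [negExpPart, eval_mul, eval_mul, eval_map_C_comp_linear, taylor_apply,
    show 1 * C z + (X - C (n : K)) = X + C (z - n) by rw [C_sub]; ring]
  simp only [eval_add, eval_mul, eval_C, eval_X]
  simp only [C_add, C_sub, C_mul, C_1]
  ring

theorem polyAct_polyAct {lam : K} (hlam : lam ≠ 0) (a b b' : K) (n m j : ℤ) (p : K[X]) :
    polyAct lam a b b' (n - m) (m + j) (polyAct lam a b b' m j p) =
      (polyPart lam (a + j) b b' n p).eval (C (m : K)) +
        lam ^ m • (expPart (a + j) b b' n p).eval (C (m : K)) +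
        lam⁻¹ ^ m • (negExpPart lam (a + j) b b' n p).eval (C (m : K)) := by
  have hsplit : C (lam ^ n) = C (lam ^ (n - m)) * C (lam ^ m) := by
    rw [← C_mul, ← zpow_add₀ hlam, sub_add_cancel]
  have hinv : C (lam⁻¹ ^ m) * C (lam ^ m) = (1 : K[X]) := by
    rw [← C_mul, ← mul_zpow, inv_mul_cancel₀ hlam, one_zpow, C_1]
  have hshift : taylor (-((n - m : ℤ) : K)) (taylor (-m : K) p) = taylor (-n : K) p := by
    rw [taylor_taylor]
    congr 2
    push_cast
    ring
  simp only [polyAct, eval_polyPart, eval_expPart, eval_negExpPart, smul_eq_C_mul, map_add, map_sub,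
    taylor_mul, taylor_C, taylor_X, hshift, hsplit]
  push_cast
  simp only [neg_sub, C_add, C_sub, C_mul]
  linear_combination -(C (lam ^ (n - m)) * ((X + (C (n : K) - C (m : K)) * C b') *
    ((C a + C (j : K) + C (m : K) * C b + (C (n : K) - C (m : K)) - X) *
      taylor (m - n : K) p))) * hinv

theorem coeff_expPoly (b' : K) (p : K[X]) :
    (expPoly b' p).coeff (1 + p.natDegree) =
      C (b' * p.leadingCoeff * (-1) ^ p.natDegree) := by
  have h := coeff_linear_mul_comp_linear (p.map C) (C b') X (-1) X
  rw [natDegree_map_eq_of_injective C_injective, leadingCoeff_map_of_injective C_injective] at h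
  rw [expPoly, h]
  simp only [C_mul, C_pow, C_neg, C_1]
  ring

theorem coeff_expPart (c b b' : K) (n : ℤ) (p : K[X]) :
    (expPart c b b' n p).coeff (1 + (1 + p.natDegree)) =
      C ((1 - b) * b' * p.leadingCoeff * (-1) ^ p.natDegree) := by
  have h := coeff_linear_mul_linear_mul_comp_linear (p.map C) (C (1 - b)) (C (c + n * b) - X) (C b')
    X (-1) X
  rw [natDegree_map_eq_of_injective C_injective, leadingCoeff_map_of_injective C_injective] at h
  rw [expPart, expPoly, h]
  simp only [C_mul, C_pow, C_neg, C_1]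
  ring

theorem coeff_negExpPart (lam c b b' : K) (n : ℤ) (p : K[X]) :
    (negExpPart lam c b b' n p).coeff (1 + (1 + p.natDegree)) =
      C ((1 - b) * b' * p.leadingCoeff * lam ^ n) := by
  have h := coeff_linear_mul_linear_mul_comp_linear (p.map C) (-C (lam ^ n * b'))
    (C (lam ^ n) * (X + C (n * b'))) (-C (1 - b)) (C (c + n) - X) 1 (X - C (n : K))
  rw [natDegree_map_eq_of_injective C_injective, leadingCoeff_map_of_injective C_injective] at h
  rw [negExpPart, h]
  simp only [C_mul, one_pow]
  ring

theorem one_mem_of_C_mem {U : Submodule K K[X]} {c : K} (hc : c ≠ 0) (h : C c ∈ U) : 1 ∈ U := by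
  simpa [smul_C, hc] using U.smul_mem c⁻¹ h

theorem degree_polyAct {lam : K} {k : ℤ} (hk : lam ^ k ≠ 1) (a b b' : K) (j : ℤ) {p : K[X]} {n : ℕ}
    (hp : p.degree = n) : (polyAct lam a b b' k j p).degree = (n + 1 : ℕ) := by
  have hn : p.natDegree = n := natDegree_eq_of_degree_eq_some hp
  have hX : (X + C (k * b')).natDegree ≤ 1 := (natDegree_X_add_C _).le
  have hX' : (C (a + k * b + j) - X).natDegree ≤ 1 := by compute_degree
  have htaylor : (taylor (-k : K) p).natDegree ≤ n := by rw [natDegree_taylor, hn]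
  have hcoeff : (polyAct lam a b b' k j p).coeff (1 + n) = (lam ^ k - 1) * p.leadingCoeff := by
    rw [polyAct, coeff_add, coeff_smul, coeff_mul_add_eq_of_natDegree_le hX htaylor,
      coeff_mul_add_eq_of_natDegree_le hX' hn.le, ← hn, coeff_taylor_natDegree, coeff_natDegree]
    simp only [coeff_add, coeff_sub, coeff_X_one, coeff_C_succ, smul_eq_mul]
    ring
  rw [add_comm]
  refine degree_eq_of_le_of_coeff_ne_zero (degree_le_of_natDegree_le ?_) ?_
  · exact natDegree_add_le_of_degree_le
      ((natDegree_smul_le _ _).trans (natDegree_mul_le_of_le hX htaylor))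
      (natDegree_mul_le_of_le hX' hn.le)
  · rw [hcoeff]
    refine mul_ne_zero (sub_ne_zero.2 hk) (leadingCoeff_ne_zero.2 ?_)
    rintro rfl
    simp at hp

theorem eq_top_of_forall_exists_degree_eq {U : Submodule K K[X]}
    (h : ∀ n : ℕ, ∃ p ∈ U, p.degree = n) : U = ⊤ := by
  choose p hp hdeg using h
  let S : Polynomial.Sequence K := ⟨p, hdeg⟩
  rw [← top_le_iff, ← S.span fun i => (leadingCoeff_ne_zero.2 (S.ne_zero i)).isUnit,
    Submodule.span_le]
  rintro _ ⟨n, rfl⟩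
  exact hp n

namespace GradedStable

variable {lam a b b' : K} {N : ℤ → Submodule K K[X]}

theorem eq_top_of_one_mem (hN : GradedStable (polyAct lam a b b') N) (h1 : lam ≠ 1)
    (hone : ∀ j, 1 ∈ N j) : N = ⊤ := by
  have hdeg (n : ℕ) : ∀ j, ∃ p ∈ N j, p.degree = n := by
    induction n with
    | zero => exact fun j => ⟨1, hone j, degree_one⟩
    | succ n ih =>
      intro j
      obtain ⟨p, hp, hpn⟩ := ih (j - 1)
      exact ⟨polyAct lam a b b' 1 (j - 1) p, by simpa using hN 1 (j - 1) p hp,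
        degree_polyAct (by simpa using h1) a b b' (j - 1) hpn⟩
  exact funext fun j => eq_top_of_forall_exists_degree_eq fun n => hdeg n j

variable [CharZero K]

theorem coeff_expPart_mem (hN : GradedStable (polyAct lam a b b') N) (hlam : lam ≠ 0) (h1 : lam ≠ 1)
    (h2 : lam ≠ -1) {j : ℤ} {p : K[X]} (hp : p ∈ N j) (n : ℤ) (i : ℕ) :
    (expPart (a + j) b b' n p).coeff i ∈ N (n + j) := by
  have hsq : lam ≠ lam⁻¹ := fun h =>
    (mul_self_eq_one_iff.1 ((mul_eq_one_iff_eq_inv₀ hlam).2 h)).elim h1 h2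
  have hinv : lam⁻¹ ≠ 1 := inv_ne_one.2 h1
  refine coeff_mem_of_sum_zpow_smul_eval_mem (μ := ![1, lam, lam⁻¹])
    (F := ![polyPart lam (a + j) b b' n p, expPart (a + j) b b' n p,
      negExpPart lam (a + j) b b' n p]) ?_ ?_ (fun m => ?_) 1 i
  · intro x y
    fin_cases x <;> fin_cases y <;> simp [h1, h1.symm, hsq, hsq.symm, hinv, hinv.symm]
  · simp [Fin.forall_fin_succ, hlam]
  · simpa [polyAct_polyAct hlam, Fin.sum_univ_three] using hN.apply_sub_apply_mem hp n m

theorem coeff_expPart_add_negExpPart_mem (hN : GradedStable (polyAct (-1) a b b') N) {j : ℤ}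
    {p : K[X]} (hp : p ∈ N j) (n : ℤ) (i : ℕ) :
    (expPart (a + j) b b' n p + negExpPart (-1) (a + j) b b' n p).coeff i ∈ N (n + j) := by
  have hone : (1 : K) ≠ -1 := by norm_num
  refine coeff_mem_of_sum_zpow_smul_eval_mem (μ := ![1, -1])
    (F := ![polyPart (-1) (a + j) b b' n p,
      expPart (a + j) b b' n p + negExpPart (-1) (a + j) b b' n p]) ?_ ?_ (fun m => ?_) 1 i
  · intro x y
    fin_cases x <;> fin_cases y <;> simp [hone, hone.symm]
  · simp [Fin.forall_fin_succ]
  · simpa [polyAct_polyAct, inv_neg, add_assoc] using hN.apply_sub_apply_mem hp n m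

theorem one_mem (hN : GradedStable (polyAct lam a b b') N) (hlam : lam ≠ 0) (h1 : lam ≠ 1)
    (h2 : lam ≠ -1) (hb' : b' ≠ 0) (hb : b ≠ 1) {j : ℤ} {p : K[X]} (hp : p ∈ N j) (hp0 : p ≠ 0)
    (i : ℤ) : 1 ∈ N i := by
  have h := hN.coeff_expPart_mem hlam h1 h2 hp (i - j) (1 + (1 + p.natDegree))
  rw [coeff_expPart, sub_add_cancel] at h
  exact one_mem_of_C_mem (by simp [sub_eq_zero, hb.symm, hb', hp0]) h

theorem one_mem_of_even (hN : GradedStable (polyAct (-1) a b b') N) (hb' : b' ≠ 0) (hb : b ≠ 1)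
    {j : ℤ} {p : K[X]} (hp : p ∈ N j) (hp0 : p ≠ 0) {n : ℤ} (hn : Even (n - p.natDegree)) :
    1 ∈ N (n + j) := by
  have hsign : (-1 : K) ^ n = (-1) ^ p.natDegree := by
    rw [← sub_add_cancel n p.natDegree, zpow_add₀ (by simp), hn.neg_one_zpow, one_mul,
      zpow_natCast]
  -- For `n` of the other parity the two leading coefficients below would cancel.
  have h := hN.coeff_expPart_add_negExpPart_mem hp n (1 + (1 + p.natDegree))
  rw [coeff_add, coeff_expPart, coeff_negExpPart, hsign, ← C_add, ← two_mul] at h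
  exact one_mem_of_C_mem (by simp [sub_eq_zero, hb.symm, hb', hp0]) h

theorem one_mem_succ (hN : GradedStable (polyAct (-1) a b b') N) (hbb : b ≠ b' + 1) {i : ℤ}
    (hi : 1 ∈ N i) (hi2 : 1 ∈ N (i + 2)) : 1 ∈ N (i + 1) := by
  have hup : polyAct (-1) a b b' 1 i 1 ∈ N (i + 1) := by
    simpa only [add_comm] using hN 1 i 1 hi
  have hdown : polyAct (-1) a b b' (-1) (i + 2) 1 ∈ N (i + 1) := by
    simpa only [show -1 + (i + 2) = i + 1 by ring] using hN (-1) (i + 2) 1 hi2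
  have hdiff : polyAct (-1) a b b' 1 i 1 - polyAct (-1) a b b' (-1) (i + 2) 1 =
      C (2 * (b - (b' + 1))) := by
    simp only [polyAct, taylor_one, smul_eq_C_mul, zpow_one, zpow_neg, inv_neg, inv_one]
    push_cast
    simp only [C_add, C_sub, C_mul, C_neg, C_1, C_ofNat]
    ring
  exact one_mem_of_C_mem (mul_ne_zero two_ne_zero (sub_ne_zero.2 hbb))
    (hdiff ▸ (N (i + 1)).sub_mem hup hdown)

theorem one_mem_neg_one (hN : GradedStable (polyAct (-1) a b b') N) (hb' : b' ≠ 0) (hb : b ≠ 1)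
    (hbb : b ≠ b' + 1) {j : ℤ} {p : K[X]} (hp : p ∈ N j) (hp0 : p ≠ 0) (i : ℤ) : 1 ∈ N i := by
  have heven {l i : ℤ} (hl : 1 ∈ N l) (h : Even (i - l)) : 1 ∈ N i := by
    simpa using hN.one_mem_of_even hb' hb hl one_ne_zero (n := i - l) (by simpa using h)
  have hl : 1 ∈ N (p.natDegree + j) := hN.one_mem_of_even hb' hb hp hp0 (by simp)
  obtain h | h := Int.even_or_odd (i - (p.natDegree + j))
  · exact heven hl h
  · exact heven (hN.one_mem_succ hbb hl (heven hl (by simp)))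
      (by simpa only [sub_sub] using h.sub_odd odd_one)

end GradedStable

theorem gradedStable_polyAct_span_C_sub_X (lam a b' : K) :
    GradedStable (polyAct lam a 1 b') fun j =>
      (Ideal.span {C (a + j) - X}).restrictScalars K := by
  intro k j p hp
  simp only [Submodule.restrictScalars_mem, Ideal.mem_span_singleton] at hp ⊢
  obtain ⟨q, rfl⟩ := hp
  refine ⟨lam ^ k • ((X + C (k * b')) * taylor (-k : K) q) + (C (a + j) - X) * q, ?_⟩
  simp only [polyAct, taylor_mul, map_sub, taylor_C, taylor_X, smul_eq_C_mul, C_neg]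
  push_cast
  simp only [C_add, C_mul, C_1]
  ring

theorem not_gradedSimple_polyAct_b_one (lam a b' : K) :
    ¬ GradedSimple K (polyAct lam a 1 b') := by
  refine (gradedStable_polyAct_span_C_sub_X lam a b').not_gradedSimple (i := 0) (j := 0) ?_ ?_
  · rw [Ne, Submodule.restrictScalars_eq_bot_iff, Ideal.span_singleton_eq_bot]
    exact sub_ne_zero.2 (X_ne_C _).symm
  · rw [Ne, Submodule.restrictScalars_eq_top_iff, Ideal.span_singleton_eq_top, ← neg_sub,
      IsUnit.neg_iff]
    exact not_isUnit_X_sub_C _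

theorem gradedStable_polyAct_one (a b b' : K) :
    GradedStable (polyAct 1 a b b') fun _ => (1 : Submodule K K[X]) := by
  intro k j p hp
  obtain ⟨c, rfl⟩ := Submodule.mem_one.1 hp
  refine Submodule.mem_one.2 ⟨(k * b' + a + k * b + j) * c, ?_⟩
  simp only [polyAct, algebraMap_eq, taylor_C, one_zpow, one_smul, C_add, C_mul]
  ring

theorem not_gradedSimple_polyAct_lam_one (a b b' : K) :
    ¬ GradedSimple K (polyAct 1 a b b') := by
  refine (gradedStable_polyAct_one a b b').not_gradedSimple (i := 0) (j := 0) one_ne_zero ?_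
  intro h
  obtain ⟨c, hc⟩ := Submodule.mem_one.1 (Submodule.eq_top_iff'.1 h X)
  simpa [algebraMap_eq] using congrArg natDegree hc

theorem gradedStable_polyAct_reflection (a b' : K) :
    GradedStable (polyAct (-1) a (b' + 1) b') fun j =>
      Module.End.eigenspace (aeval (C (a + j) - X : K[X])).toLinearMap ((-1 : K) ^ j) := by
  intro k j p hp
  simp only [Module.End.mem_eigenspace_iff, AlgHom.toLinearMap_apply, ← comp_eq_aeval] at hp ⊢
  have htaylor : (taylor (-k : K) p).comp (C (a + (k + j : ℤ)) - X) = (-1 : K) ^ j • p := by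
    rw [taylor_apply, comp_assoc, ← hp]
    congr 1
    simp only [add_comp, X_comp, C_comp]
    push_cast
    simp only [C_add, C_neg]
    ring
  have hcomp : p.comp (C (a + (k + j : ℤ)) - X) = (-1 : K) ^ j • taylor (-k : K) p := by
    rw [← map_smul, ← hp, taylor_apply, comp_assoc]
    congr 1
    simp only [sub_comp, X_comp, C_comp]
    push_cast
    simp only [C_add, C_neg]
    ring
  have hsq : C ((-1 : K) ^ k) * C ((-1 : K) ^ k) = (1 : K[X]) := by
    rw [← C_mul, ← mul_zpow, neg_one_mul, neg_neg, one_zpow, C_1]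
  rw [zpow_add₀ (by simp)]
  simp only [polyAct, add_comp, sub_comp, mul_comp, X_comp, C_comp, smul_eq_C_mul, htaylor, hcomp]
  push_cast
  simp only [C_add, C_mul, C_1]
  linear_combination (-(C ((-1) ^ j) * (X + C (k : K) * C b') * taylor (-k : K) p)) * hsq

theorem not_gradedSimple_polyAct_neg_one [CharZero K] (a b' : K) :
    ¬ GradedSimple K (polyAct (-1) a (b' + 1) b') := by
  refine (gradedStable_polyAct_reflection a b').not_gradedSimple (i := 0) (j := 1) ?_ ?_
  · refine (Submodule.ne_bot_iff _).2 ⟨1, ?_, one_ne_zero⟩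
    simp
  · intro h
    have hone := Module.End.mem_eigenspace_iff.1 (Submodule.eq_top_iff'.1 h 1)
    rw [AlgHom.toLinearMap_apply, map_one, zpow_one, neg_one_smul] at hone
    exact one_ne_zero (self_eq_neg.1 hone)

theorem gradedSimple_polyAct_of_one_mem {lam a b b' : K} (h1 : lam ≠ 1)
    (hone : ∀ N : ℤ → Submodule K K[X], GradedStable (polyAct lam a b b') N →
      ∀ j, ∀ p ∈ N j, p ≠ 0 → ∀ i, 1 ∈ N i) :
    GradedSimple K (polyAct lam a b b') := by
  refine ⟨⟨1, one_ne_zero⟩, fun N hN => or_iff_not_imp_left.2 fun hbot => ?_⟩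
  obtain ⟨j, hj⟩ := Function.ne_iff.1 hbot
  obtain ⟨p, hp, hp0⟩ := Submodule.exists_mem_ne_zero_of_ne_bot hj
  exact hN.eq_top_of_one_mem h1 (hone N hN j p hp hp0)

theorem gradedSimple_polyAct_iff [CharZero K] {lam a b b' : K} (hlam : lam ≠ 0) (hb' : b' ≠ 0) :
    GradedSimple K (polyAct lam a b b') ↔
      (lam ≠ 1 ∧ lam ≠ -1 ∧ b ≠ 1) ∨ (lam = -1 ∧ b ≠ 1 ∧ b ≠ b' + 1) := by
  constructor
  · intro h
    have hb : b ≠ 1 := fun hb => not_gradedSimple_polyAct_b_one lam a b' (hb ▸ h)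
    have h1 : lam ≠ 1 := fun h1 => not_gradedSimple_polyAct_lam_one a b b' (h1 ▸ h)
    obtain rfl | h2 := eq_or_ne lam (-1)
    · exact .inr ⟨rfl, hb, fun hbb => not_gradedSimple_polyAct_neg_one a b' (hbb ▸ h)⟩
    · exact .inl ⟨h1, h2, hb⟩
  · rintro (⟨h1, h2, hb⟩ | ⟨rfl, hb, hbb⟩)
    · exact gradedSimple_polyAct_of_one_mem h1 fun N hN j p hp hp0 =>
        hN.one_mem hlam h1 h2 hb' hb hp hp0
    · exact gradedSimple_polyAct_of_one_mem (by norm_num) fun N hN j p hp hp0 =>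
        hN.one_mem_neg_one hb' hb hbb hp hp0

end PolynomialModel

namespace WittRep

open Polynomial Filter

variable {W : Type*} [AddCommGroup W] [Module ℂ W] {ρ : WittRep W}

theorem d_d_neg_one (ρ : WittRep W) {i : ℤ} (hi : -1 ≤ i) (w : W) :
    ρ.d i (ρ.d (-1) w) = ρ.d (-1) (ρ.d i w) - ((i : ℂ) + 1) • ρ.d (i - 1) w := by
  have h := LinearMap.congr_fun (ρ.comm i (-1) hi le_rfl) w
  simp only [LinearMap.sub_apply, LinearMap.comp_apply, LinearMap.smul_apply] at h
  rw [sub_eq_iff_eq_add.1 h, ← sub_eq_add_neg i 1]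
  push_cast
  module

theorem IsSimple.generates (hs : ρ.IsSimple) {w : W} (hw : w ≠ 0) : ρ.Generates w := by
  refine fun U hU hwU => (hs.2 U hU).resolve_left ?_
  rintro rfl
  exact hw hwU

section ExponentialOperator

theorem eventually_E_eq_sum (hO : ρ.InO) (k : ℤ) (w : W) :
    ∀ᶠ n in atTop, ρ.E k w =
      ∑ i ∈ Finset.range n, ((k : ℂ) ^ i / (i.factorial : ℂ)) • ρ.d ((i : ℤ) - 1) w := by
  obtain ⟨N, hN⟩ := hO w
  filter_upwards [eventually_gt_atTop N] with n hn
  refine finsum_eq_sum_of_support_subset _ fun i hi => ?_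
  contrapose! hi
  have hni : n ≤ i := by simpa using hi
  simp [hN (i - 1) (by omega)]

theorem E_zero_right (ρ : WittRep W) (k : ℤ) : ρ.E k 0 = 0 := by
  simp [E]

theorem E_add (hO : ρ.InO) (k : ℤ) (u v : W) : ρ.E k (u + v) = ρ.E k u + ρ.E k v := by
  obtain ⟨n, huv, hu, hv⟩ := ((eventually_E_eq_sum hO k (u + v)).and
    ((eventually_E_eq_sum hO k u).and (eventually_E_eq_sum hO k v))).exists
  simp only [huv, hu, hv, map_add, smul_add, Finset.sum_add_distrib]

theorem E_smul (hO : ρ.InO) (k : ℤ) (c : ℂ) (w : W) : ρ.E k (c • w) = c • ρ.E k w := by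
  obtain ⟨n, hcw, hw⟩ := ((eventually_E_eq_sum hO k (c • w)).and
    (eventually_E_eq_sum hO k w)).exists
  simp only [hcw, hw, map_smul, Finset.smul_sum, smul_comm c]

theorem E_zero_left (ρ : WittRep W) (w : W) : ρ.E 0 w = ρ.d (-1) w := by
  rw [E, finsum_eq_single _ 0 fun i hi => by simp [hi]]
  simp

theorem E_d_neg_one (hO : ρ.InO) (k : ℤ) (w : W) :
    ρ.E k (ρ.d (-1) w) = ρ.d (-1) (ρ.E k w) - (k : ℂ) • ρ.E k w := by
  obtain ⟨n, ⟨hdw, hw_succ⟩, hw⟩ := (((tendsto_add_atTop_nat 1).eventually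
    ((eventually_E_eq_sum hO k (ρ.d (-1) w)).and (eventually_E_eq_sum hO k w))).and
      (eventually_E_eq_sum hO k w)).exists
  have hshift : ∑ i ∈ Finset.range (n + 1),
      ((k : ℂ) ^ i / (i.factorial : ℂ) * i) • ρ.d ((i : ℤ) - 1 - 1) w = (k : ℂ) • ρ.E k w := by
    rw [hw, Finset.sum_range_succ', Finset.smul_sum, Nat.cast_zero, mul_zero, zero_smul, add_zero]
    refine Finset.sum_congr rfl fun i _ => ?_
    have hcoeff : (k : ℂ) ^ (i + 1) / ((i + 1).factorial : ℂ) * ((i + 1 : ℕ) : ℂ) =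
        k * (k ^ i / (i.factorial : ℂ)) := by
      have hi : ((i + 1 : ℕ) : ℂ) ≠ 0 := Nat.cast_ne_zero.2 i.succ_ne_zero
      rw [Nat.factorial_succ, Nat.cast_mul, div_mul_eq_mul_div, mul_comm (_ ^ _),
        mul_div_mul_left _ _ hi, pow_succ', mul_div_assoc]
    rw [hcoeff, mul_smul, Nat.cast_succ, add_sub_cancel_right]
  rw [← hshift, hdw, hw_succ, map_sum, ← Finset.sum_sub_distrib]
  refine Finset.sum_congr rfl fun i _ => ?_
  rw [d_d_neg_one ρ (by omega), map_smul, smul_sub, smul_smul, Int.cast_sub, Int.cast_one,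
    sub_add_cancel, Int.cast_natCast]

theorem IsHW.E_apply {w₀ : W} {b' : ℂ} (hhw : ρ.IsHW w₀ b') (k : ℤ) :
    ρ.E k w₀ = ρ.d (-1) w₀ + (k * b') • w₀ := by
  have hsupport : (Function.support fun i : ℕ =>
      ((k : ℂ) ^ i / (i.factorial : ℂ)) • ρ.d ((i : ℤ) - 1) w₀) ⊆ Finset.range 2 := by
    intro i hi
    contrapose! hi
    have hi' : 1 < i := by simpa using hi
    simp [hhw.2.2 (i - 1) (by omega)]
  rw [E, finsum_eq_sum_of_support_subset _ hsupport]
  simp [Finset.sum_range_succ, hhw.2.1, smul_smul]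

end ExponentialOperator

section OrbitMap

/-- The map `p ↦ p(d_{-1}) w`, the comparison with the polynomial model. -/
noncomputable def orbitMap (ρ : WittRep W) (w : W) : ℂ[X] →ₗ[ℂ] W :=
  LinearMap.applyₗ w ∘ₗ (aeval (ρ.d (-1))).toLinearMap

theorem orbitMap_apply (ρ : WittRep W) (w : W) (p : ℂ[X]) :
    ρ.orbitMap w p = aeval (ρ.d (-1)) p w := rfl

theorem orbitMap_C (ρ : WittRep W) (w : W) (c : ℂ) : ρ.orbitMap w (C c) = c • w := by
  simp [orbitMap_apply, Module.algebraMap_end_apply]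

theorem orbitMap_one (ρ : WittRep W) (w : W) : ρ.orbitMap w 1 = w := by
  simp [orbitMap_apply]

theorem orbitMap_X_mul (ρ : WittRep W) (w : W) (p : ℂ[X]) :
    ρ.orbitMap w (X * p) = ρ.d (-1) (ρ.orbitMap w p) := by
  simp [orbitMap_apply, Module.End.mul_apply]

theorem invariant_range_orbitMap {w : W}
    (hw : ∀ i : ℤ, 0 ≤ i → ρ.d i w ∈ LinearMap.range (ρ.orbitMap w)) :
    ρ.Invariant (LinearMap.range (ρ.orbitMap w)) := by
  have hneg (u : W) (hu : u ∈ LinearMap.range (ρ.orbitMap w)) :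
      ρ.d (-1) u ∈ LinearMap.range (ρ.orbitMap w) := by
    obtain ⟨p, rfl⟩ := hu
    exact ⟨X * p, ρ.orbitMap_X_mul w p⟩
  rintro i hi _ ⟨p, rfl⟩
  induction p using Polynomial.induction_on' generalizing i with
  | add p q hp hq =>
    rw [map_add, map_add]
    exact add_mem (hp i hi) (hq i hi)
  | monomial n c =>
    induction n generalizing i with
    | zero =>
      rw [monomial_zero_left, orbitMap_C, map_smul]
      refine Submodule.smul_mem _ _ ?_
      obtain rfl | hi := hi.eq_or_lt
      · exact hneg w ⟨1, ρ.orbitMap_one w⟩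
      · exact hw i hi
    | succ n ih =>
      rw [← X_mul_monomial, orbitMap_X_mul]
      obtain rfl | hi' := hi.eq_or_lt
      · exact hneg _ (ih (-1) hi)
      · rw [d_d_neg_one ρ hi]
        exact sub_mem (hneg _ (ih i hi)) (Submodule.smul_mem _ _ (ih (i - 1) (by omega)))

variable {w₀ : W} {b' : ℂ}

theorem IsHW.orbitMap_surjective (hhw : ρ.IsHW w₀ b') (hgen : ρ.Generates w₀) :
    Function.Surjective (ρ.orbitMap w₀) := by
  refine LinearMap.range_eq_top.1
    (hgen _ (invariant_range_orbitMap fun i hi => ?_) ⟨1, ρ.orbitMap_one w₀⟩)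
  obtain rfl | hi := hi.eq_or_lt
  · exact ⟨C b', by rw [orbitMap_C, hhw.2.1]⟩
  · exact hhw.2.2 i hi ▸ zero_mem _

theorem IsHW.E_orbitMap (hhw : ρ.IsHW w₀ b') (hO : ρ.InO) (k : ℤ) (p : ℂ[X]) :
    ρ.E k (ρ.orbitMap w₀ p) =
      ρ.orbitMap w₀ ((X + C (k * b')) * taylor (-k : ℂ) p) := by
  induction p using Polynomial.induction_on' with
  | add p q hp hq => rw [map_add, E_add hO, hp, hq, map_add, mul_add, map_add]
  | monomial n c =>
    induction n with
    | zero =>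
      rw [monomial_zero_left, orbitMap_C, E_smul hO, hhw.E_apply, taylor_C, mul_comm _ (C c),
        ← smul_eq_C_mul, map_smul, map_add, orbitMap_C, ← mul_one X, orbitMap_X_mul, orbitMap_one]
    | succ n ih =>
      rw [← X_mul_monomial, orbitMap_X_mul, E_d_neg_one hO, ih, ← orbitMap_X_mul, ← map_smul,
        ← map_sub, taylor_mul, taylor_X, smul_eq_C_mul, C_neg]
      congr 1
      ring

-- If `p(d_{-1})` kills `w₀`, then so do the coefficients in `k` of `(X + k b') p(X - k)`, the
-- top one of which is a nonzero constant.
theorem IsHW.orbitMap_injective (hhw : ρ.IsHW w₀ b') (hO : ρ.InO) (hb' : b' ≠ 0) :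
    Function.Injective (ρ.orbitMap w₀) := by
  refine (injective_iff_map_eq_zero _).2 fun p hp => by_contra fun hp0 => hhw.1 ?_
  have heval (k : ℤ) : (expPoly b' p).eval (k : ℂ[X]) ∈ LinearMap.ker (ρ.orbitMap w₀) := by
    rw [← map_intCast (C : ℂ →+* ℂ[X]) k, eval_expPoly, LinearMap.mem_ker,
      ← hhw.E_orbitMap hO, hp, E_zero_right]
  have hcoeff := coeff_mem_of_sum_zpow_smul_eval_mem (ι := Unit) (μ := fun _ => (1 : ℂ))
    (U := LinearMap.ker (ρ.orbitMap w₀)) (F := fun _ => expPoly b' p)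
    (Function.injective_of_subsingleton _) (fun _ => one_ne_zero)
    (by simpa using heval) () (1 + p.natDegree)
  rw [coeff_expPoly] at hcoeff
  simpa [orbitMap_one] using one_mem_of_C_mem (by simp [hb', hp0]) hcoeff

theorem IsHW.d_neg_one_ne_zero (hhw : ρ.IsHW w₀ 0) (hgen : ρ.Generates w₀)
    (hnt : ¬ ρ.IsTrivial) : ρ.d (-1) w₀ ≠ 0 := by
  refine fun h => hnt fun i hi => LinearMap.ext fun w => ?_
  have hann (i : ℤ) (hi : -1 ≤ i) : ρ.d i w₀ = 0 := by
    obtain rfl | rfl | hi : i = -1 ∨ i = 0 ∨ 1 ≤ i := by omega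
    · exact h
    · rw [hhw.2.1, zero_smul]
    · exact hhw.2.2 i hi
  have hspan : ℂ ∙ w₀ = ⊤ := by
    refine hgen _ (fun i hi u hu => ?_) (Submodule.mem_span_singleton_self w₀)
    obtain ⟨c, rfl⟩ := Submodule.mem_span_singleton.1 hu
    simp [hann i hi]
  obtain ⟨c, rfl⟩ := Submodule.mem_span_singleton.1 (hspan ▸ Submodule.mem_top : w ∈ ℂ ∙ w₀)
  simp [hann i hi]

theorem IsHW.d_neg_one (hhw : ρ.IsHW w₀ 0) (h : ρ.d (-1) w₀ ≠ 0) :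
    ρ.IsHW (ρ.d (-1) w₀) (-1) := by
  refine ⟨h, ?_, fun i hi => ?_⟩
  · simp [d_d_neg_one, hhw.2.1]
  · have hpred : ρ.d (i - 1) w₀ = 0 := by
      obtain rfl | hi' := hi.eq_or_lt
      · simp [hhw.2.1]
      · exact hhw.2.2 _ (by omega)
    simp [d_d_neg_one ρ (by omega : -1 ≤ i), hhw.2.2 i hi, hpred]

theorem IsHW.weight_ne_zero (hhw : ρ.IsHW w₀ b') (hO : ρ.InO) (hnt : ¬ ρ.IsTrivial)
    (hs : ρ.IsSimple) : b' ≠ 0 := by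
  rintro rfl
  have hu := hhw.d_neg_one_ne_zero (hs.generates hhw.1) hnt
  have hhwu := hhw.d_neg_one hu
  obtain ⟨q, hq⟩ := hhwu.orbitMap_surjective (hs.generates hu) w₀
  have hXq : X * q = 1 := hhwu.orbitMap_injective hO (by simp) (by
    rw [orbitMap_X_mul, hq, orbitMap_one])
  exact not_isUnit_X (IsUnit.of_mul_eq_one q hXq)

end OrbitMap

/-- The component of degree `j` of the action of `d_k` on `L(W, λ, a, b)`. -/
noncomputable def componentAct (ρ : WittRep W) (lam a b : ℂ) (k j : ℤ) (w : W) : W :=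
  lam ^ k • ρ.E k w - ρ.d (-1) w + (a + (k : ℂ) * b + (j : ℂ)) • w

theorem gradedAct_componentAct (ρ : WittRep W) (lam a b : ℂ) :
    gradedAct (ρ.componentAct lam a b) = ρ.Lact lam a b := rfl

theorem componentAct_zero_right (ρ : WittRep W) (lam a b : ℂ) (k j : ℤ) :
    ρ.componentAct lam a b k j 0 = 0 := by
  simp [componentAct, E_zero_right]

theorem componentAct_zero_left (ρ : WittRep W) (lam a b : ℂ) (j : ℤ) (w : W) :
    ρ.componentAct lam a b 0 j w = (a + j) • w := by
  simp [componentAct, E_zero_left]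

theorem actSimple_Lact_iff (ρ : WittRep W) (lam a b : ℂ) :
    ActSimple (ρ.Lact lam a b) ↔ GradedSimple ℂ (ρ.componentAct lam a b) := by
  rw [← gradedAct_componentAct]
  exact actSimple_gradedAct_iff (ρ.componentAct_zero_right lam a b)
    ((add_right_injective a).comp Int.cast_injective) (ρ.componentAct_zero_left lam a b)

theorem IsHW.orbitMap_polyAct {w₀ : W} {b' : ℂ} (hhw : ρ.IsHW w₀ b') (hO : ρ.InO) (lam a b : ℂ)
    (k j : ℤ) (p : ℂ[X]) :
    ρ.orbitMap w₀ (polyAct lam a b b' k j p) =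
      ρ.componentAct lam a b k j (ρ.orbitMap w₀ p) := by
  rw [polyAct, componentAct, hhw.E_orbitMap hO, sub_mul, ← smul_eq_C_mul, map_add, map_sub,
    map_smul, map_smul, orbitMap_X_mul]
  abel

end WittRep

theorem stmt11 {W : Type*} [AddCommGroup W] [Module ℂ W] (ρ : WittRep W)
    (hO : ρ.InO) (hnt : ¬ ρ.IsTrivial) (hs : ρ.IsSimple)
    (lam a b b' : ℂ) (hlam : lam ≠ 0) (w₀ : W) (hhw : ρ.IsHW w₀ b') :
    ActSimple (ρ.Lact lam a b) ↔
      ((lam ≠ 1 ∧ lam ≠ -1 ∧ b ≠ 1) ∨ (lam = -1 ∧ b ≠ 1 ∧ b ≠ b' + 1)) := by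
  have hb' : b' ≠ 0 := hhw.weight_ne_zero hO hnt hs
  let e : Polynomial ℂ ≃ₗ[ℂ] W := LinearEquiv.ofBijective (ρ.orbitMap w₀)
    ⟨hhw.orbitMap_injective hO hb', hhw.orbitMap_surjective (hs.generates hhw.1)⟩
  calc ActSimple (ρ.Lact lam a b)
      ↔ GradedSimple ℂ (ρ.componentAct lam a b) := ρ.actSimple_Lact_iff lam a b
    _ ↔ GradedSimple ℂ (polyAct lam a b b') :=
      (gradedSimple_congr e (hhw.orbitMap_polyAct hO lam a b)).symm
    _ ↔ _ := gradedSimple_polyAct_iff hlam hb'
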